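/- Let f be ℝ-differentiable at a real point q ∈ ℝ ⊆ ℍ with continuous partials, satisfying ∂f/∂x = i ∂f/∂t, ∂f/∂y = j ∂f/∂t, ∂f/∂z = k ∂f/∂t at q. Then lim_{h→0} h⁻¹(f(q+h) - f(q) - h·(∂f/∂t)(q)) = 0, i.e., the total differential M_f h equals h·(∂f/∂t)(q) for all h ∈ ℍ. -/

import Mathlib

noncomputable section
open Quaternion Filter Topology

def qi : ℍ[ℝ] := ⟨0, 1, 0, 0⟩
def qj : ℍ[ℝ] := ⟨0, 0, 1, 0⟩
def qk : ℍ[ℝ] := ⟨0, 0, 0, 1⟩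

/-- Every quaternion is the combination of `1`, `qi`, `qj`, `qk` given by its coordinates. -/
theorem eq_smul_one_add_smul_qi_add_smul_qj_add_smul_qk (h : ℍ[ℝ]) :
    h = h.re • (1 : ℍ[ℝ]) + h.imI • qi + h.imJ • qj + h.imK • qk := by
  ext <;> simp <;> simp [qi, qj, qk]

/-- A real-linear map satisfying `L u = u * L 1` for `u = i, j, k` is right multiplication
by `L 1`. -/
theorem apply_eq_mul_apply_one (L : ℍ[ℝ] →L[ℝ] ℍ[ℝ]) (hi : L qi = qi * L 1)
    (hj : L qj = qj * L 1) (hk : L qk = qk * L 1) (h : ℍ[ℝ]) : L h = h * L 1 := by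
  rw [eq_smul_one_add_smul_qi_add_smul_qj_add_smul_qk h]
  simp only [map_add, map_smul, hi, hj, hk, add_mul, smul_mul_assoc, one_mul]

/-- The Fréchet derivative as a limit of left quaternionic difference quotients. -/
theorem HasFDerivAt.tendsto_inv_mul {f : ℍ[ℝ] → ℍ[ℝ]} {L : ℍ[ℝ] →L[ℝ] ℍ[ℝ]} {q : ℍ[ℝ]}
    (hf : HasFDerivAt f L q) :
    Tendsto (fun h => h⁻¹ * (f (q + h) - f q - L h)) (𝓝[≠] 0) (𝓝 0) := by
  have ho := (hasFDerivAt_iff_isLittleO_nhds_zero.mp hf).norm_norm.tendsto_div_nhds_zero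
  refine tendsto_zero_iff_norm_tendsto_zero.mpr
    ((ho.mono_left nhdsWithin_le_nhds).congr fun h => ?_)
  rw [norm_mul, norm_inv, div_eq_inv_mul]

theorem stmt_13 (f : ℍ[ℝ] → ℍ[ℝ]) (t : ℝ) (q : ℍ[ℝ]) (hq : q = (t : ℍ[ℝ]))
    (hdiff : DifferentiableAt ℝ f q)
    (hcont : ContinuousAt (fun p => fderiv ℝ f p) q)
    (hx : fderiv ℝ f q qi = qi * fderiv ℝ f q 1)
    (hy : fderiv ℝ f q qj = qj * fderiv ℝ f q 1)
    (hz : fderiv ℝ f q qk = qk * fderiv ℝ f q 1) :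
    Tendsto (fun h : ℍ[ℝ] => h⁻¹ * (f (q + h) - f q - h * fderiv ℝ f q 1))
      (𝓝[≠] 0) (𝓝 0) ∧
    ∀ h : ℍ[ℝ], fderiv ℝ f q h = h * fderiv ℝ f q 1 := by
  have hL := apply_eq_mul_apply_one (fderiv ℝ f q) hx hy hz
  refine ⟨?_, hL⟩
  simpa only [← hL] using hdiff.hasFDerivAt.tendsto_inv_mul
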